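/- Let n ≥ 3 be an integer and set d := n − 1. Let 1 ≤ q, r ≤ ∞, put q* := max{2, q} and let q*' := q*/(q*−1) be its Hölder conjugate. Assume 1 ≤ p < q*'(n−1), and assume additionally q < ∞ if n = 3. Then there exists a constant C = C(p, q, r, n) > 0 such that for all slice-Schwartz functions f, g : ℝ^d × (0,∞) → ℂ, the pointwise product fg satisfies ‖f g‖_{L̃^{q*/2}(Ḃ^{(n−1)/p + 2/q* − 2}_{p,r})} ≤ C ‖f‖_{L̃^{q*}(Ḃ^{(n−1)/p + 1/q* − 1}_{p,r})} ‖g‖_{L̃^{q*}(Ḃ^{(n−1)/p + 1/q* − 1}_{p,r})}. (Bilinear estimate in scaling critical Chemin–Lerner spaces.) -/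

import Mathlib

/-!
Since the Littlewood–Paley symbols are nonnegative and sum to one, products in the Wiener algebra
satisfy `|Δ_j (u v)| ≤ ∑_{k,l} |Δ_j (Δ_k u Δ_l v)|` pointwise, and only those triples contribute in
which each of `j, k, l` is at most the maximum of the other two plus `3`.

For `p' ≥ p` with `1/p + 1/p' ≤ 1`, the Young, Hölder and Bernstein inequalities give
`‖Δ_j (Δ_k u Δ_l v)‖_p ≲ 2^{d j / p' + d l (1/p - 1/p')} ‖Δ_k u‖_p ‖Δ_l v‖_p`.
By symmetry let `l ≤ k`. For the paraproduct (`|j - k| ≤ 3`) the choice `p' = ∞` works, and for the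
high-high interaction (`|k - l| ≤ 3`, `j ≤ l`) the choice `1/p' = min (1/p) (1 - 1/p)` works: a
product of functions of regularities `s₁, s₂ < d/p` with `s₁ + s₂ > max 0 (d (2/p - 1))` gains the
factor `2^{-δ |j - k| - δ |j - l|}` over the regularity `s₁ + s₂ - d/p`. Minkowski's and Hölder's
inequalities in time and Young's inequality on `ℤ` sum these factors.

For `s₁ = s₂ = d/p + 1/q* - 1` the three conditions read `q* > 1`, `p < q*' d` and `d + 2/q* > 2`;
for `d = 2` the last one fails exactly when `q = ∞`. Hölder's inequality on `ℤ` gives `ℓ^r` from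
`ℓ^r` and `ℓ^∞`, and `ℓ^r ⊆ ℓ^∞`.
-/

open MeasureTheory Filter Complex
open scoped ENNReal NNReal RealInnerProductSpace Topology

noncomputable section

abbrev Rd (d : ℕ) := EuclideanSpace ℝ (Fin d)

/-- Fourier transform with the paper's convention `F[f](ξ) = ∫ e^{-i x·ξ} f(x) dx`. -/
def FT {d : ℕ} (f : Rd d → ℂ) (ξ : Rd d) : ℂ :=
  ∫ x : Rd d, Complex.exp (-Complex.I * (↑(⟪x, ξ⟫) : ℂ)) * f x

/-- A Littlewood–Paley family: a Schwartz function `φ₀` whose Fourier transform is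
real, takes values in `[0,1]`, is supported in the annulus `1/2 ≤ |ξ| ≤ 2`, and whose
dyadic dilates sum to `1` away from the origin. -/
structure LPData (d : ℕ) where
  φ : SchwartzMap (Rd d) ℂ
  him : ∀ ξ : Rd d, (FT (⇑φ) ξ).im = 0
  h0 : ∀ ξ : Rd d, 0 ≤ (FT (⇑φ) ξ).re
  h1 : ∀ ξ : Rd d, (FT (⇑φ) ξ).re ≤ 1
  hsupp : ∀ ξ : Rd d, FT (⇑φ) ξ ≠ 0 → (1/2 : ℝ) ≤ ‖ξ‖ ∧ ‖ξ‖ ≤ 2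
  hsum : ∀ ξ : Rd d, ξ ≠ 0 → HasSum (fun j : ℤ => FT (⇑φ) ((2:ℝ) ^ (-j) • ξ)) 1

/-- Littlewood–Paley block `Δ_j f = φ_j * f`, where `φ_j(x) = 2^{dj} φ₀(2^j x)`. -/
def LP {d : ℕ} (P : LPData d) (j : ℤ) (f : Rd d → ℂ) (x : Rd d) : ℂ :=
  ∫ y : Rd d, (((2:ℝ) ^ ((d : ℤ) * j) : ℝ) : ℂ) * P.φ ((2:ℝ) ^ j • y) * f (x - y)

/-- `ℓ^r(ℤ)`-norm of a family of extended nonnegative reals. -/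
def ellNorm (r : ℝ≥0∞) (a : ℤ → ℝ≥0∞) : ℝ≥0∞ :=
  if r = ∞ then ⨆ j, a j else (∑' j, a j ^ r.toReal) ^ (1 / r.toReal)

/-- Homogeneous Besov norm `‖f‖_{Ḃ^s_{p,r}}`. -/
def besov {d : ℕ} (P : LPData d) (s : ℝ) (p r : ℝ≥0∞) (f : Rd d → ℂ) : ℝ≥0∞ :=
  ellNorm r fun j => ENNReal.ofReal ((2:ℝ) ^ (s * (j:ℝ))) * eLpNorm (LP P j f) p volume

/-- Mixed norm `L^q_t(0,∞; L^p_x)`. -/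
def LqLp {d : ℕ} (q p : ℝ≥0∞) (g : ℝ → Rd d → ℂ) : ℝ≥0∞ :=
  if q = ∞ then essSup (fun t => eLpNorm (g t) p volume) (volume.restrict (Set.Ioi (0:ℝ)))
  else (∫⁻ t in Set.Ioi (0:ℝ), (eLpNorm (g t) p volume) ^ q.toReal) ^ (1 / q.toReal)

/-- Chemin–Lerner norm `‖f‖_{L̃^q(Ḃ^s_{p,r})}` on `ℝ^d × (0,∞)`. -/
def CL {d : ℕ} (P : LPData d) (s : ℝ) (q p r : ℝ≥0∞) (f : ℝ → Rd d → ℂ) : ℝ≥0∞ :=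
  ellNorm r fun j => ENNReal.ofReal ((2:ℝ) ^ (s * (j:ℝ))) * LqLp q p fun t => LP P j (f t)

/-- `f : ℝ^d × (0,∞) → ℂ` (curried as `f t x`) is slice-Schwartz: continuous on
`ℝ^d × (0,∞)` and Schwartz in `x` for each fixed `t > 0`. -/
def SliceSchwartz {d : ℕ} (f : ℝ → Rd d → ℂ) : Prop :=
  ContinuousOn (fun z : Rd d × ℝ => f z.2 z.1) (Set.univ ×ˢ Set.Ioi 0) ∧
  ∀ t : ℝ, 0 < t → ∃ g : SchwartzMap (Rd d) ℂ, f t = ⇑g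

lemma inv_toReal_le_inv_toReal {p q : ℝ≥0∞} (hp : p ≠ 0) (hpq : p ≤ q) :
    q.toReal⁻¹ ≤ p.toReal⁻¹ := by
  simpa only [ENNReal.toReal_inv] using
    ENNReal.toReal_mono (ENNReal.inv_ne_top.2 hp) (ENNReal.inv_le_inv.2 hpq)

lemma inv_toReal_le_one {p : ℝ≥0∞} (hp : 1 ≤ p) : p.toReal⁻¹ ≤ 1 := by
  simpa using inv_toReal_le_inv_toReal one_ne_zero hp

lemma ne_zero_of_holderTriple {p q r : ℝ≥0∞} [ENNReal.HolderTriple p q r] (hp : p ≠ 0)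
    (hq : q ≠ 0) : r ≠ 0 := by
  rw [← ENNReal.inv_ne_top, ENNReal.HolderTriple.inv_eq p q r]
  exact ENNReal.add_ne_top.2 ⟨ENNReal.inv_ne_top.2 hp, ENNReal.inv_ne_top.2 hq⟩

lemma inv_toReal_add_inv_toReal {p q r : ℝ≥0∞} [ENNReal.HolderTriple p q r] (hr : r ≠ 0) :
    p.toReal⁻¹ + q.toReal⁻¹ = r.toReal⁻¹ := by
  have hinv := ENNReal.HolderTriple.inv_add_inv_eq_inv p q r
  have hp : p ≠ 0 := ((pos_iff_ne_zero.2 hr).trans_le (ENNReal.HolderTriple.le p q r)).ne'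
  have hq : q ≠ 0 := ((pos_iff_ne_zero.2 hr).trans_le (ENNReal.HolderTriple.le q p r)).ne'
  simpa [ENNReal.toReal_add, hp, hq] using congrArg ENNReal.toReal hinv

section Lp

variable {α ι : Type*} [MeasurableSpace α] {μ : Measure α} {f g : α → ℝ≥0∞} {p q r : ℝ≥0∞}

lemma eLpNorm_rpow_toReal (hp : p ≠ 0) (hp' : p ≠ ∞) :
    eLpNorm f p μ ^ p.toReal = ∫⁻ x, f x ^ p.toReal ∂μ := by
  rw [eLpNorm_eq_lintegral_rpow_enorm_toReal hp hp', one_div,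
    ENNReal.rpow_inv_rpow (ENNReal.toReal_pos hp hp').ne']
  simp only [enorm_eq_self]

lemma eLpNorm_const_mul (c : ℝ≥0∞) (hp : p ≠ 0) (hf : AEMeasurable f μ) :
    eLpNorm (fun x => c * f x) p μ = c * eLpNorm f p μ := by
  rcases eq_or_ne p ∞ with rfl | hp'
  · simp only [eLpNorm_exponent_top, eLpNormEssSup, enorm_eq_self, ENNReal.essSup_const_mul]
  · have hp0 := ENNReal.toReal_pos hp hp'
    rw [← (ENNReal.strictMono_rpow_of_pos hp0).injective.eq_iff,
      ENNReal.mul_rpow_of_nonneg _ _ hp0.le, eLpNorm_rpow_toReal hp hp', eLpNorm_rpow_toReal hp hp',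
      ← lintegral_const_mul'' _ (hf.pow_const _)]
    simp only [ENNReal.mul_rpow_of_nonneg _ _ hp0.le]

lemma eLpNorm_tsum_le [Countable ι] {F : ι → α → ℝ≥0∞} (hF : ∀ i, AEMeasurable (F i) μ)
    (hp : 1 ≤ p) : eLpNorm (fun x => ∑' i, F i x) p μ ≤ ∑' i, eLpNorm (F i) p μ := by
  have hp0 : p ≠ 0 := (zero_lt_one.trans_le hp).ne'
  rcases eq_or_ne p ∞ with rfl | hp'
  · simp only [eLpNorm_exponent_top, eLpNormEssSup, enorm_eq_self]
    refine essSup_le_of_ae_le _ ?_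
    filter_upwards [ae_all_iff.2 fun i => ENNReal.ae_le_essSup (F i)] with x hx
    exact ENNReal.tsum_le_tsum hx
  have hpos := ENNReal.toReal_pos hp0 hp'
  have sup_rpow (x : α) :
      (∑' i, F i x) ^ p.toReal = ⨆ s : Finset ι, (∑ i ∈ s, F i x) ^ p.toReal := by
    rw [ENNReal.tsum_eq_iSup_sum]
    exact (ENNReal.orderIsoRpow p.toReal hpos).map_iSup _
  rw [← ENNReal.rpow_le_rpow_iff hpos, eLpNorm_rpow_toReal hp0 hp']
  simp_rw [sup_rpow]
  rw [lintegral_iSup_directed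
    (fun s => (Finset.aemeasurable_fun_sum s fun i _ => hF i).pow_const _)
    (directed_of_isDirected_le fun s t hst x =>
      ENNReal.rpow_le_rpow (Finset.sum_le_sum_of_subset hst) hpos.le)]
  refine iSup_le fun s => ?_
  rw [← eLpNorm_rpow_toReal hp0 hp']
  gcongr
  calc eLpNorm (fun x => ∑ i ∈ s, F i x) p μ = eLpNorm (∑ i ∈ s, F i) p μ := by
        congr 1; ext x; rw [Finset.sum_apply]
    _ ≤ ∑ i ∈ s, eLpNorm (F i) p μ :=
        eLpNorm_sum_le (fun i _ => (hF i).aestronglyMeasurable) hp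
    _ ≤ ∑' i, eLpNorm (F i) p μ := ENNReal.sum_le_tsum s

lemma eLpNorm_mul_le [ENNReal.HolderTriple p q r] (hf : AEMeasurable f μ)
    (hg : AEMeasurable g μ) :
    eLpNorm (fun x => f x * g x) r μ ≤ eLpNorm f p μ * eLpNorm g q μ := by
  have top_mul {u v : α → ℝ≥0∞} {s : ℝ≥0∞} (hs : s ≠ 0) (hv : AEMeasurable v μ) :
      eLpNorm (fun x => u x * v x) s μ ≤ eLpNorm u ∞ μ * eLpNorm v s μ := by
    refine (eLpNorm_mono_enorm_ae ?_).trans (eLpNorm_const_mul _ hs hv).le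
    filter_upwards [ENNReal.ae_le_essSup u] with x hx
    simpa only [enorm_eq_self, eLpNorm_exponent_top, eLpNormEssSup] using by gcongr
  rcases eq_or_ne r 0 with rfl | hr
  · simp
  rcases eq_or_ne p ∞ with rfl | hp'
  · obtain rfl := ENNReal.HolderTriple.unique ∞ q r q
    exact top_mul hr hg
  rcases eq_or_ne q ∞ with rfl | hq'
  · obtain rfl := ENNReal.HolderTriple.unique p ∞ r p
    simpa only [mul_comm] using top_mul (u := g) hr hf
  have hp : p ≠ 0 := ((pos_iff_ne_zero.2 hr).trans_le (ENNReal.HolderTriple.le p q r)).ne'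
  have hq : q ≠ 0 := ((pos_iff_ne_zero.2 hr).trans_le (ENNReal.HolderTriple.le q p r)).ne'
  have hr' : r ≠ ∞ := ne_top_of_le_ne_top hp' (ENNReal.HolderTriple.le p q r)
  have hr0 := ENNReal.toReal_pos hr hr'
  have hq0 := ENNReal.toReal_pos hq hq'
  have hp0 := ENNReal.toReal_pos hp hp'
  have hlt : r.toReal < p.toReal := by
    rw [← inv_lt_inv₀ hp0 hr0]
    linarith [inv_pos.2 hq0, inv_toReal_add_inv_toReal (p := p) (q := q) hr]
  rw [eLpNorm_eq_lintegral_rpow_enorm_toReal hr hr', eLpNorm_eq_lintegral_rpow_enorm_toReal hp hp',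
    eLpNorm_eq_lintegral_rpow_enorm_toReal hq hq']
  exact ENNReal.lintegral_Lp_mul_le_Lq_mul_Lr hr0 hlt (by simp only [one_div,
    inv_toReal_add_inv_toReal (p := p) (q := q) hr]) μ hf hg

lemma lintegral_mul_rpow_le {h a : α → ℝ≥0∞} (hh : Measurable h) (ha : Measurable a) {p : ℝ}
    (hp : 1 ≤ p) :
    (∫⁻ y, h y * a y ∂μ) ^ p ≤ (∫⁻ y, h y ∂μ) ^ (p - 1) * ∫⁻ y, h y * a y ^ p ∂μ := by
  have hp0 : 0 < p := by linarith
  have key := eLpNorm'_le_eLpNorm'_mul_rpow_measure_univ (μ := μ.withDensity h) (f := a)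
    zero_lt_one hp ha.aestronglyMeasurable
  simp only [eLpNorm', enorm_eq_self, ENNReal.rpow_one, div_one] at key
  rw [lintegral_withDensity_eq_lintegral_mul _ hh ha,
    lintegral_withDensity_eq_lintegral_mul _ hh (ha.pow_const _), withDensity_apply _ .univ,
    Measure.restrict_univ] at key
  simp only [Pi.mul_apply] at key
  calc (∫⁻ y, h y * a y ∂μ) ^ p
      ≤ ((∫⁻ y, h y * a y ^ p ∂μ) ^ (1 / p) * (∫⁻ y, h y ∂μ) ^ (1 - 1 / p)) ^ p :=
        ENNReal.rpow_le_rpow (by simpa using key) hp0.le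
    _ = (∫⁻ y, h y ∂μ) ^ (p - 1) * ∫⁻ y, h y * a y ^ p ∂μ := by
      rw [ENNReal.mul_rpow_of_nonneg _ _ hp0.le, ← ENNReal.rpow_mul, ← ENNReal.rpow_mul,
        one_div_mul_cancel hp0.ne', ENNReal.rpow_one, mul_comm, sub_mul,
        one_div_mul_cancel hp0.ne', one_mul]

lemma eLpNorm_le_rpow_mul_rpow {M : ℝ≥0∞} (hp : p ≠ 0) (hp' : p ≠ ∞) (hpq : p ≤ q)
    (hf : AEMeasurable f μ) (hM : ∀ x, f x ≤ M) :
    eLpNorm f q μ ≤ M ^ (1 - p.toReal / q.toReal) * eLpNorm f p μ ^ (p.toReal / q.toReal) := by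
  rcases eq_or_ne q ∞ with rfl | hq'
  · simpa [eLpNormEssSup] using essSup_le_of_ae_le _ (Eventually.of_forall hM)
  have hq : q ≠ 0 := (pos_iff_ne_zero.2 hp |>.trans_le hpq).ne'
  have hp0 := ENNReal.toReal_pos hp hp'
  have hq0 := ENNReal.toReal_pos hq hq'
  have hpq' : p.toReal ≤ q.toReal := ENNReal.toReal_mono hq' hpq
  have hsub : 0 ≤ q.toReal - p.toReal := sub_nonneg.2 hpq'
  rw [← ENNReal.rpow_le_rpow_iff hq0, eLpNorm_rpow_toReal hq hq',
    ENNReal.mul_rpow_of_nonneg _ _ hq0.le, ← ENNReal.rpow_mul, ← ENNReal.rpow_mul,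
    div_mul_cancel₀ _ hq0.ne', sub_mul, one_mul, div_mul_cancel₀ _ hq0.ne',
    eLpNorm_rpow_toReal hp hp', ← lintegral_const_mul'' _ (hf.pow_const _)]
  refine lintegral_mono fun x => ?_
  calc f x ^ q.toReal = f x ^ (q.toReal - p.toReal) * f x ^ p.toReal := by
        rw [← ENNReal.rpow_add_of_nonneg _ _ hsub hp0.le, sub_add_cancel]
    _ ≤ M ^ (q.toReal - p.toReal) * f x ^ p.toReal := by gcongr; exact hM x

end Lp

lemma rpow_sub_one_mul_self (x : ℝ≥0∞) {p : ℝ} (hp : 1 ≤ p) : x ^ (p - 1) * x = x ^ p := by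
  conv_lhs => rw [← ENNReal.rpow_one x, ← ENNReal.rpow_mul, one_mul,
    ← ENNReal.rpow_add_of_nonneg _ _ (sub_nonneg.2 hp) zero_le_one, sub_add_cancel]

section Convolution

variable {G : Type*} [AddCommGroup G] [MeasurableSpace G] [MeasurableAdd₂ G] [MeasurableNeg G]
  {μ : Measure G} {h a : G → ℝ≥0∞} {p q B L : ℝ≥0∞}

lemma lconvolution_rpow_le (hh : Measurable h) (ha : Measurable a) {p : ℝ} (hp : 1 ≤ p) (x : G) :
    (h ⋆ₗ[μ] a) x ^ p ≤ (∫⁻ y, h y ∂μ) ^ (p - 1) * ∫⁻ y, h y * a (-y + x) ^ p ∂μ :=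
  lintegral_mul_rpow_le hh (by fun_prop) hp

variable [μ.IsAddLeftInvariant] [μ.IsNegInvariant]

lemma lconvolution_le (hh : Measurable h) (ha : Measurable a) (hp : 1 ≤ p) (hp' : p ≠ ∞)
    (hB : ∫⁻ y, h y ∂μ ≤ B) (hL : ∀ y, h y ≤ B * L) (x : G) :
    (h ⋆ₗ[μ] a) x ≤ B * L ^ p.toReal⁻¹ * eLpNorm a p μ := by
  have hp0 : p ≠ 0 := (zero_lt_one.trans_le hp).ne'
  have hpos := ENNReal.toReal_pos hp0 hp'
  have hp1 : 1 ≤ p.toReal := by simpa using ENNReal.toReal_mono hp' hp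
  rw [← ENNReal.rpow_le_rpow_iff hpos]
  calc (h ⋆ₗ[μ] a) x ^ p.toReal
      ≤ (∫⁻ y, h y ∂μ) ^ (p.toReal - 1) * ∫⁻ y, h y * a (-y + x) ^ p.toReal ∂μ :=
        lconvolution_rpow_le hh ha hp1 x
    _ ≤ B ^ (p.toReal - 1) * ∫⁻ y, (B * L) * a (-y + x) ^ p.toReal ∂μ := by
        gcongr with y
        exact hL y
    _ = B ^ (p.toReal - 1) * B * L * ∫⁻ y, a y ^ p.toReal ∂μ := by
        rw [lintegral_const_mul _ (by fun_prop)]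
        simp_rw [neg_add_eq_sub]
        rw [lintegral_sub_left_eq_self (fun y => a y ^ p.toReal) x]
        ring
    _ = (B * L ^ p.toReal⁻¹ * eLpNorm a p μ) ^ p.toReal := by
        rw [ENNReal.mul_rpow_of_nonneg _ _ hpos.le, ENNReal.mul_rpow_of_nonneg _ _ hpos.le,
          ENNReal.rpow_inv_rpow hpos.ne', eLpNorm_rpow_toReal hp0 hp', rpow_sub_one_mul_self _ hp1]

variable [SFinite μ]

lemma eLpNorm_lconvolution_le (hh : Measurable h) (ha : Measurable a) (hp : 1 ≤ p) :
    eLpNorm (h ⋆ₗ[μ] a) p μ ≤ (∫⁻ y, h y ∂μ) * eLpNorm a p μ := by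
  have hp0 : p ≠ 0 := (zero_lt_one.trans_le hp).ne'
  rcases eq_or_ne p ∞ with rfl | hp'
  · refine essSup_le_of_ae_le _ (Eventually.of_forall fun x => ?_)
    simp only [enorm_eq_self]
    rw [lconvolution_def, ← lintegral_mul_const _ hh]
    refine lintegral_mono_ae ?_
    filter_upwards [(μ.measurePreserving_sub_left x).quasiMeasurePreserving.ae
      (ENNReal.ae_le_essSup a)] with y hy
    rw [neg_add_eq_sub]
    simpa only [eLpNorm_exponent_top, eLpNormEssSup, enorm_eq_self] using by gcongr
  have hpos := ENNReal.toReal_pos hp0 hp'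
  have hp1 : 1 ≤ p.toReal := by simpa using ENNReal.toReal_mono hp' hp
  rw [← ENNReal.rpow_le_rpow_iff hpos, ENNReal.mul_rpow_of_nonneg _ _ hpos.le,
    eLpNorm_rpow_toReal hp0 hp', eLpNorm_rpow_toReal hp0 hp']
  calc ∫⁻ x, (h ⋆ₗ[μ] a) x ^ p.toReal ∂μ
      ≤ ∫⁻ x, (∫⁻ y, h y ∂μ) ^ (p.toReal - 1) * ∫⁻ y, h y * a (-y + x) ^ p.toReal ∂μ ∂μ :=
        lintegral_mono fun x => lconvolution_rpow_le hh ha hp1 x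
    _ = (∫⁻ y, h y ∂μ) ^ (p.toReal - 1) * ∫⁻ y, h y * ∫⁻ x, a (-y + x) ^ p.toReal ∂μ ∂μ := by
        rw [lintegral_const_mul _ (by fun_prop), lintegral_lintegral_swap (by fun_prop)]
        congr 2; ext y
        rw [lintegral_const_mul _ (by fun_prop)]
    _ = (∫⁻ y, h y ∂μ) ^ p.toReal * ∫⁻ x, a x ^ p.toReal ∂μ := by
        simp_rw [lintegral_add_left_eq_self (fun x => a x ^ p.toReal)]
        rw [lintegral_mul_const _ hh, ← mul_assoc, rpow_sub_one_mul_self _ hp1]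

lemma eLpNorm_lconvolution_le_of_le (hh : Measurable h) (ha : Measurable a) (hp : 1 ≤ p)
    (hpq : p ≤ q) (hB : ∫⁻ y, h y ∂μ ≤ B) (hL : ∀ y, h y ≤ B * L) :
    eLpNorm (h ⋆ₗ[μ] a) q μ ≤ B * L ^ (p.toReal⁻¹ - q.toReal⁻¹) * eLpNorm a p μ := by
  have young : eLpNorm (h ⋆ₗ[μ] a) p μ ≤ B * eLpNorm a p μ :=
    (eLpNorm_lconvolution_le hh ha hp).trans (by gcongr)
  rcases eq_or_ne p ∞ with rfl | hp'
  · obtain rfl := top_le_iff.1 hpq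
    simpa using young
  have hp0 : p ≠ 0 := (zero_lt_one.trans_le hp).ne'
  have hpos := ENNReal.toReal_pos hp0 hp'
  set θ := p.toReal / q.toReal with hθ
  have hθ0 : 0 ≤ θ := by positivity
  have hθ1 : 0 ≤ 1 - θ := by
    rcases eq_or_ne q ∞ with rfl | hq'
    · simp [hθ]
    · exact sub_nonneg.2 (div_le_one_of_le₀ (ENNReal.toReal_mono hq' hpq) ENNReal.toReal_nonneg)
  have rpow_split (X : ℝ≥0∞) : X ^ (1 - θ) * X ^ θ = X := by
    rw [← ENNReal.rpow_add_of_nonneg _ _ hθ1 hθ0, sub_add_cancel, ENNReal.rpow_one]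
  have exponent : p.toReal⁻¹ * (1 - θ) = p.toReal⁻¹ - q.toReal⁻¹ := by
    rw [hθ, mul_sub, mul_one, ← mul_div_assoc, inv_mul_cancel₀ hpos.ne', one_div]
  calc eLpNorm (h ⋆ₗ[μ] a) q μ
      ≤ (B * L ^ p.toReal⁻¹ * eLpNorm a p μ) ^ (1 - θ) * eLpNorm (h ⋆ₗ[μ] a) p μ ^ θ :=
        eLpNorm_le_rpow_mul_rpow hp0 hp' hpq (measurable_lconvolution μ hh ha).aemeasurable
          (lconvolution_le hh ha hp hp' hB hL)
    _ ≤ (B * L ^ p.toReal⁻¹ * eLpNorm a p μ) ^ (1 - θ) * (B * eLpNorm a p μ) ^ θ := by gcongr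
    _ = (B ^ (1 - θ) * B ^ θ) * L ^ (p.toReal⁻¹ * (1 - θ)) *
          (eLpNorm a p μ ^ (1 - θ) * eLpNorm a p μ ^ θ) := by
        simp only [ENNReal.mul_rpow_of_nonneg _ _ hθ0, ENNReal.mul_rpow_of_nonneg _ _ hθ1,
          ENNReal.rpow_mul]
        ring
    _ = B * L ^ (p.toReal⁻¹ - q.toReal⁻¹) * eLpNorm a p μ := by
        rw [rpow_split, rpow_split, exponent]

end Convolution

section Symbol

open FourierTransform

variable {d : ℕ} (P : LPData d)

/-- The convolution kernel `φ_j` of `Δ_j`. -/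
def lpKernel (j : ℤ) (y : Rd d) : ℂ :=
  (((2:ℝ) ^ ((d : ℤ) * j) : ℝ) : ℂ) * P.φ ((2:ℝ) ^ j • y)

/-- The Fourier multiplier of `Δ_j`, as a function of Mathlib's frequency variable `v`, which
corresponds to the angular frequency `ξ = 2π v` of `FT`. -/
def lpSymbol (j : ℤ) (v : Rd d) : ℂ :=
  FT P.φ ((2:ℝ) ^ (-j) • (2 * Real.pi) • v)

lemma LP_eq (j : ℤ) (f : Rd d → ℂ) (x : Rd d) :
    LP P j f x = ∫ y, lpKernel P j y * f (x - y) := rfl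

lemma continuous_lpKernel (j : ℤ) : Continuous (lpKernel P j) :=
  continuous_const.mul (P.φ.continuous.comp (continuous_const_smul _))

lemma integrable_lpKernel (j : ℤ) : Integrable (lpKernel P j) :=
  (P.φ.integrable.comp_smul (by positivity)).const_mul _

lemma integral_dilation {F : Type*} [NormedAddCommGroup F] [NormedSpace ℝ F] (j : ℤ)
    (f : Rd d → F) : ((2:ℝ) ^ ((d : ℤ) * j)) • ∫ y, f ((2:ℝ) ^ j • y) = ∫ y, f y := by
  rw [Measure.integral_comp_smul_of_nonneg _ _ _ (hR := by positivity), smul_smul,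
    finrank_euclideanSpace, Fintype.card_fin, ← zpow_natCast, ← zpow_mul, mul_comm j,
    mul_inv_cancel₀ (by positivity), one_smul]

lemma fourier_lpKernel (j : ℤ) : 𝓕 (lpKernel P j) = lpSymbol P j := by
  ext v
  rw [Real.fourier_eq', lpSymbol, FT, ← integral_dilation j fun y : Rd d =>
    cexp (-I * ⟪y, (2:ℝ) ^ (-j) • (2 * Real.pi) • v⟫) * P.φ y, Complex.real_smul,
    ← integral_const_mul]
  congr 1; ext y
  have inner_dilation :
      ⟪(2:ℝ) ^ j • y, (2:ℝ) ^ (-j) • (2 * Real.pi) • v⟫ = 2 * Real.pi * ⟪y, v⟫ := by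
    simp only [inner_smul_left, inner_smul_right, conj_trivial, zpow_neg]
    field_simp
  rw [inner_dilation, lpKernel, smul_eq_mul]
  push_cast
  ring_nf

lemma continuous_lpSymbol (j : ℤ) : Continuous (lpSymbol P j) := by
  rw [← fourier_lpKernel]
  exact VectorFourier.fourierIntegral_continuous Real.continuous_fourierChar continuous_inner
    (integrable_lpKernel P j)

lemma norm_lpSymbol (j : ℤ) (v : Rd d) : ‖lpSymbol P j v‖ = (lpSymbol P j v).re := by
  rw [eq_comm, Complex.re_eq_norm]
  exact Complex.nonneg_iff.2 ⟨P.h0 _, (P.him _).symm⟩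

lemma norm_lpSymbol_le_one (j : ℤ) (v : Rd d) : ‖lpSymbol P j v‖ ≤ 1 :=
  (norm_lpSymbol P j v).trans_le (P.h1 _)

lemma hasSum_lpSymbol {v : Rd d} (hv : v ≠ 0) : HasSum (fun j => lpSymbol P j v) 1 :=
  P.hsum _ (smul_ne_zero Real.two_pi_pos.ne' hv)

lemma tsum_enorm_lpSymbol {v : Rd d} (hv : v ≠ 0) : ∑' j, ‖lpSymbol P j v‖ₑ = 1 := by
  have hasSum_re := Complex.hasSum_re (hasSum_lpSymbol P hv)
  simp_rw [← ofReal_norm, norm_lpSymbol]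
  rw [← ENNReal.ofReal_tsum_of_nonneg (f := fun j => (lpSymbol P j v).re)
    (fun j => P.h0 _) hasSum_re.summable, hasSum_re.tsum_eq,
    Complex.one_re, ENNReal.ofReal_one]

variable {P} {j k l : ℤ} {u v w : Rd d}

lemma norm_mem_Icc_of_lpSymbol_ne_zero (h : lpSymbol P j v ≠ 0) :
    ‖(2 * Real.pi) • v‖ ∈ Set.Icc ((2:ℝ) ^ (j - 1)) ((2:ℝ) ^ (j + 1)) := by
  have supp := P.hsupp _ h
  have hj : (0:ℝ) < 2 ^ j := by positivity
  rw [norm_smul, Real.norm_of_nonneg (by positivity), zpow_neg, inv_mul_eq_div,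
    le_div_iff₀ hj, div_le_iff₀ hj] at supp
  rw [zpow_sub_one₀ two_ne_zero, zpow_add_one₀ two_ne_zero]
  constructor <;> linarith [supp.1, supp.2]

lemma le_add_three_of_norm_le_add (h : ‖u‖ ≤ ‖v‖ + ‖w‖) (hu : lpSymbol P j u ≠ 0)
    (hv : lpSymbol P k v ≠ 0) (hw : lpSymbol P l w ≠ 0) : j ≤ max k l + 3 := by
  have norm_le {i : ℤ} {z : Rd d} (hz : lpSymbol P i z ≠ 0) (hi : i ≤ max k l) :
      ‖(2 * Real.pi) • z‖ ≤ (2:ℝ) ^ (max k l + 1) :=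
    (norm_mem_Icc_of_lpSymbol_ne_zero hz).2.trans (zpow_le_zpow_right₀ one_le_two (by omega))
  have triangle : ‖(2 * Real.pi) • u‖ ≤ ‖(2 * Real.pi) • v‖ + ‖(2 * Real.pi) • w‖ := by
    simp only [norm_smul, ← mul_add]
    gcongr
  have dyadic : (2:ℝ) ^ (j - 1) ≤ 2 ^ (max k l + 1 + 1) := by
    rw [zpow_add_one₀ two_ne_zero (max k l + 1)]
    linarith [(norm_mem_Icc_of_lpSymbol_ne_zero hu).1, norm_le hv (le_max_left _ _),
      norm_le hw (le_max_right _ _)]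
  have := (zpow_le_zpow_iff_right₀ (one_lt_two (α := ℝ))).1 dyadic
  omega

lemma le_add_two_of_lpSymbol_ne_zero (hj : lpSymbol P j v ≠ 0) (hk : lpSymbol P k v ≠ 0) :
    j ≤ k + 2 := by
  have := (zpow_le_zpow_iff_right₀ (one_lt_two (α := ℝ))).1
    ((norm_mem_Icc_of_lpSymbol_ne_zero hj).1.trans (norm_mem_Icc_of_lpSymbol_ne_zero hk).2)
  omega

end Symbol

section Wiener

open FourierTransform Convolution

variable {d : ℕ}

/-- Inverse Fourier transforms of integrable functions (the Wiener algebra). All frequency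
decompositions below converge absolutely and pointwise on this class. -/
def IsWiener (u : Rd d → ℂ) : Prop :=
  ∃ H : Rd d → ℂ, Integrable H ∧ u = 𝓕⁻ H

lemma isWiener_schwartzMap (u : SchwartzMap (Rd d) ℂ) : IsWiener (u : Rd d → ℂ) :=
  ⟨(𝓕 u : SchwartzMap (Rd d) ℂ), SchwartzMap.integrable _, by
    rw [← SchwartzMap.fourierInv_coe, FourierTransform.fourierInv_fourier_eq]⟩

lemma fourierInv_mul_fourierInv {H K : Rd d → ℂ} (hH : Integrable H) (hK : Integrable K) :
    𝓕⁻ H * 𝓕⁻ K = 𝓕⁻ (H ⋆[ContinuousLinearMap.mul ℂ ℂ] K) := by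
  ext x
  simp only [Pi.mul_apply, Real.fourierInv_eq_fourier_neg,
    Real.fourier_mul_convolution_eq hH hK]

lemma continuous_fourierInv {H : Rd d → ℂ} (hH : Integrable H) : Continuous (𝓕⁻ H) := by
  have : 𝓕⁻ H = 𝓕 H ∘ Neg.neg := by ext x; exact Real.fourierInv_eq_fourier_neg H x
  rw [this]
  exact (VectorFourier.fourierIntegral_continuous Real.continuous_fourierChar continuous_inner
    hH).comp continuous_neg

lemma IsWiener.continuous {u : Rd d → ℂ} (hu : IsWiener u) : Continuous u := by
  obtain ⟨H, hH, rfl⟩ := hu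
  exact continuous_fourierInv hH

lemma IsWiener.mul {u v : Rd d → ℂ} (hu : IsWiener u) (hv : IsWiener v) : IsWiener (u * v) := by
  obtain ⟨H, hH, rfl⟩ := hu
  obtain ⟨K, hK, rfl⟩ := hv
  exact ⟨_, hH.integrable_convolution _ hK, fourierInv_mul_fourierInv hH hK⟩

variable (P : LPData d) {H K : Rd d → ℂ}

lemma integrable_lpSymbol_mul (j : ℤ) (hH : Integrable H) : Integrable (lpSymbol P j * H) :=
  hH.bdd_mul (continuous_lpSymbol P j).aestronglyMeasurable
    (Eventually.of_forall (norm_lpSymbol_le_one P j))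

lemma LP_fourierInv (j : ℤ) (hH : Integrable H) :
    LP P j (𝓕⁻ H) = 𝓕⁻ (lpSymbol P j * H) := by
  ext x
  have modulation : Integrable fun v => Real.fourierChar ⟪v, x⟫ • H v :=
    (Real.fourierIntegral_convergent_iff (-x)).2 hH |>.congr (by simp)
  have shift (y : Rd d) : 𝓕⁻ H (x - y) = 𝓕 (fun v => Real.fourierChar ⟪v, x⟫ • H v) y := by
    rw [Real.fourierInv_eq, Real.fourier_eq]
    congr 1; ext v
    rw [smul_smul, ← AddChar.map_add_eq_mul, inner_sub_right, neg_add_eq_sub]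
  calc LP P j (𝓕⁻ H) x
      = ∫ y, lpKernel P j y • 𝓕 (fun v => Real.fourierChar ⟪v, x⟫ • H v) y := by
        simp_rw [LP_eq, shift, smul_eq_mul]
    _ = ∫ v, lpSymbol P j v • Real.fourierChar ⟪v, x⟫ • H v := by
        rw [← fourier_lpKernel]
        simpa using! (VectorFourier.integral_fourierIntegral_smul_eq_flip (L := innerₗ (Rd d))
          (μ := volume) (ν := volume) Real.continuous_fourierChar continuous_inner
          (integrable_lpKernel P j) modulation).symm
    _ = 𝓕⁻ (lpSymbol P j * H) x := by
        simp only [Real.fourierInv_eq, Pi.mul_apply, smul_eq_mul, mul_smul_comm]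

lemma isWiener_LP (j : ℤ) {u : Rd d → ℂ} (hu : IsWiener u) : IsWiener (LP P j u) := by
  obtain ⟨H, hH, rfl⟩ := hu
  exact ⟨_, integrable_lpSymbol_mul P j hH, LP_fourierInv P j hH⟩

variable {u v : Rd d → ℂ} {P} {j k l : ℤ}

lemma fourierInv_zero : 𝓕⁻ (0 : Rd d → ℂ) = 0 := by
  ext x
  simp [Real.fourierInv_eq]

lemma LP_LP_eq_zero (hu : IsWiener u) (hjk : k + 2 < j ∨ j + 2 < k) :
    LP P j (LP P k u) = 0 := by
  obtain ⟨H, hH, rfl⟩ := hu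
  rw [LP_fourierInv P k hH, LP_fourierInv P j (integrable_lpSymbol_mul P k hH), ← fourierInv_zero]
  congr 1; ext v
  by_contra h
  have hj := left_ne_zero_of_mul h
  have hk := left_ne_zero_of_mul (right_ne_zero_of_mul h)
  have := le_add_two_of_lpSymbol_ne_zero hj hk
  have := le_add_two_of_lpSymbol_ne_zero hk hj
  omega

lemma LP_mul_LP_eq_zero (hu : IsWiener u) (hv : IsWiener v)
    (hjkl : max k l + 3 < j ∨ max j l + 3 < k ∨ max j k + 3 < l) :
    LP P j (LP P k u * LP P l v) = 0 := by
  obtain ⟨H, hH, rfl⟩ := hu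
  obtain ⟨K, hK, rfl⟩ := hv
  have hH' := integrable_lpSymbol_mul P k hH
  have hK' := integrable_lpSymbol_mul P l hK
  rw [LP_fourierInv P k hH, LP_fourierInv P l hK, fourierInv_mul_fourierInv hH' hK',
    LP_fourierInv P j (hH'.integrable_convolution _ hK'), ← fourierInv_zero]
  congr 1; ext x
  by_contra h
  have hj := left_ne_zero_of_mul h
  obtain ⟨t, ht⟩ := exists_ne_zero_of_integral_ne_zero (right_ne_zero_of_mul h)
  have hk := left_ne_zero_of_mul (left_ne_zero_of_mul ht)
  have hl := left_ne_zero_of_mul (right_ne_zero_of_mul ht)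
  have := le_add_three_of_norm_le_add (by simpa using norm_add_le t (x - t)) hj hk hl
  have := le_add_three_of_norm_le_add (by simpa using norm_sub_le x (x - t)) hk hj hl
  have := le_add_three_of_norm_le_add (norm_sub_le x t) hl hj hk
  omega

lemma LP_tsum {ι : Type*} [Countable ι] {F : ι → Rd d → ℂ} (hF : ∀ i, Continuous (F i))
    {M : ℝ≥0∞} (hM : M ≠ ∞) (hFM : ∀ x, ∑' i, ‖F i x‖ₑ ≤ M) (j : ℤ) (x : Rd d) :
    LP P j (fun y => ∑' i, F i y) x = ∑' i, LP P j (F i) x := by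
  have integrand_measurable (i : ι) :
      AEStronglyMeasurable (fun y => lpKernel P j y * F i (x - y)) volume :=
    ((continuous_lpKernel P j).mul ((hF i).comp (continuous_sub_left x))).aestronglyMeasurable
  simp_rw [LP_eq, ← tsum_mul_left]
  refine integral_tsum integrand_measurable (ne_top_of_le_ne_top
    (ENNReal.mul_ne_top (integrable_lpKernel P j).2.ne hM) ?_)
  calc ∑' i, ∫⁻ y, ‖lpKernel P j y * F i (x - y)‖ₑ
      = ∫⁻ y, ‖lpKernel P j y‖ₑ * ∑' i, ‖F i (x - y)‖ₑ := by
        rw [← lintegral_tsum fun i => (integrand_measurable i).enorm]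
        simp_rw [enorm_mul, ENNReal.tsum_mul_left]
    _ ≤ ∫⁻ y, ‖lpKernel P j y‖ₑ * M := by gcongr; exact hFM _
    _ = (∫⁻ y, ‖lpKernel P j y‖ₑ) * M :=
        lintegral_mul_const _ (continuous_lpKernel P j).measurable.enorm

lemma enorm_fourierChar_smul (y x : Rd d) (z : ℂ) : ‖Real.fourierChar ⟪y, x⟫ • z‖ₑ = ‖z‖ₑ := by
  rw [← ofReal_norm, Circle.norm_smul, ofReal_norm]

variable [Nontrivial (Rd d)]

lemma tsum_lintegral_enorm_lpSymbol_mul (hH : Integrable H) :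
    ∑' k, ∫⁻ v, ‖(lpSymbol P k * H) v‖ₑ = ∫⁻ v, ‖H v‖ₑ := by
  rw [← lintegral_tsum fun k => (integrable_lpSymbol_mul P k hH).aestronglyMeasurable.enorm]
  refine lintegral_congr_ae ?_
  filter_upwards [Measure.ae_ne volume (0 : Rd d)] with v hv
  simp_rw [Pi.mul_apply, enorm_mul]
  rw [ENNReal.tsum_mul_right, tsum_enorm_lpSymbol P hv, one_mul]

lemma exists_tsum_enorm_LP_le (P : LPData d) (hu : IsWiener u) :
    ∃ M ≠ ∞, ∀ x, ∑' k, ‖LP P k u x‖ₑ ≤ M := by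
  obtain ⟨H, hH, rfl⟩ := hu
  refine ⟨∫⁻ v, ‖H v‖ₑ, hH.2.ne, fun x => ?_⟩
  rw [← tsum_lintegral_enorm_lpSymbol_mul (P := P) hH]
  refine ENNReal.tsum_le_tsum fun k => ?_
  rw [LP_fourierInv P k hH, Real.fourierInv_eq]
  exact (enorm_integral_le_lintegral_enorm _).trans_eq (by simp_rw [enorm_fourierChar_smul])

lemma summable_norm_LP (hu : IsWiener u) (x : Rd d) : Summable fun k => ‖LP P k u x‖ := by
  obtain ⟨M, hM, hPM⟩ := exists_tsum_enorm_LP_le P hu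
  exact tsum_enorm_ne_top_iff_summable_norm.1 (ne_top_of_le_ne_top hM (hPM x))

lemma hasSum_LP (hu : IsWiener u) (x : Rd d) : HasSum (fun k => LP P k u x) (u x) := by
  rw [(summable_norm_LP hu x).of_norm.hasSum_iff]
  obtain ⟨H, hH, rfl⟩ := hu
  simp_rw [LP_fourierInv P _ hH, Real.fourierInv_eq]
  rw [← integral_tsum]
  · refine integral_congr_ae ?_
    filter_upwards [Measure.ae_ne volume (0 : Rd d)] with v hv
    have hasSum_mul := (hasSum_lpSymbol P hv).mul_right (H v)
    rw [one_mul] at hasSum_mul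
    exact (hasSum_mul.const_smul (Real.fourierChar ⟪v, x⟫)).tsum_eq
  · exact fun k => ((Real.fourierIntegral_convergent_iff (-x)).2
      (integrable_lpSymbol_mul P k hH)).aestronglyMeasurable.congr (by simp)
  · simp_rw [enorm_fourierChar_smul]
    exact (tsum_lintegral_enorm_lpSymbol_mul hH).trans_ne hH.2.ne

lemma mul_eq_tsum_LP_mul_LP (hu : IsWiener u) (hv : IsWiener v) :
    u * v = fun x => ∑' n : ℤ × ℤ, (LP P n.1 u * LP P n.2 v) x := by
  ext x
  have product := tsum_mul_tsum_of_summable_norm (summable_norm_LP (P := P) hu x)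
    (summable_norm_LP (P := P) hv x)
  rw [(hasSum_LP hu x).tsum_eq, (hasSum_LP hv x).tsum_eq] at product
  exact product

lemma enorm_LP_mul_le (hu : IsWiener u) (hv : IsWiener v) (j : ℤ) (x : Rd d) :
    ‖LP P j (u * v) x‖ₑ ≤ ∑' n : ℤ × ℤ, ‖LP P j (LP P n.1 u * LP P n.2 v) x‖ₑ := by
  obtain ⟨M, hM, hPM⟩ := exists_tsum_enorm_LP_le P hu
  obtain ⟨N, hN, hPN⟩ := exists_tsum_enorm_LP_le P hv
  have product_bound (y : Rd d) : ∑' n : ℤ × ℤ, ‖(LP P n.1 u * LP P n.2 v) y‖ₑ ≤ M * N := by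
    simp only [Pi.mul_apply, enorm_mul]
    rw [ENNReal.tsum_prod']
    simp_rw [ENNReal.tsum_mul_left, ENNReal.tsum_mul_right]
    exact mul_le_mul' (hPM y) (hPN y)
  conv_lhs => rw [mul_eq_tsum_LP_mul_LP (P := P) hu hv]
  rw [LP_tsum (fun n => (isWiener_LP P _ hu).continuous.mul
    (isWiener_LP P _ hv).continuous) (ENNReal.mul_ne_top hM hN) product_bound]
  exact enorm_tsum_le_tsum_enorm

end Wiener

section Bernstein

lemma two_rpow_add (x y : ℝ) : (2:ℝ≥0∞) ^ (x + y) = 2 ^ x * 2 ^ y :=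
  ENNReal.rpow_add x y two_ne_zero ENNReal.ofNat_ne_top

lemma ofReal_two_rpow (x : ℝ) : ENNReal.ofReal ((2:ℝ) ^ x) = 2 ^ x := by
  rw [← ENNReal.ofReal_rpow_of_pos two_pos, ENNReal.ofReal_ofNat]

variable {d : ℕ} (P : LPData d) {u v U : Rd d → ℂ} {p q m : ℝ≥0∞}

/-- The constant in the bounds below: it dominates both the mass and the height of `φ₀`. -/
def kernelBound : ℝ≥0∞ :=
  max (∫⁻ y, ‖P.φ y‖ₑ) (⨆ y, ‖P.φ y‖ₑ)

lemma kernelBound_ne_top : kernelBound P ≠ ∞ := by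
  refine (max_lt P.φ.integrable.2 ?_).ne
  refine (iSup_le fun y => ?_ : _ ≤ ENNReal.ofReal (SchwartzMap.seminorm ℝ 0 0 P.φ)).trans_lt
    ENNReal.ofReal_lt_top
  rw [← ofReal_norm]
  exact ENNReal.ofReal_le_ofReal (P.φ.norm_le_seminorm ℝ y)

lemma enorm_two_zpow (j : ℤ) :
    ‖(((2:ℝ) ^ ((d : ℤ) * j) : ℝ) : ℂ)‖ₑ = (2:ℝ≥0∞) ^ ((d:ℝ) * j) := by
  rw [← ofReal_norm, Complex.norm_real, Real.norm_of_nonneg (by positivity), ← ofReal_two_rpow]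
  norm_cast

lemma lintegral_enorm_lpKernel_le (j : ℤ) : ∫⁻ y, ‖lpKernel P j y‖ₑ ≤ kernelBound P := by
  have norm_lpKernel (y : Rd d) :
      ‖lpKernel P j y‖ = (2:ℝ) ^ ((d : ℤ) * j) * ‖P.φ ((2:ℝ) ^ j • y)‖ := by
    rw [lpKernel, norm_mul, Complex.norm_real, Real.norm_of_nonneg (by positivity)]
  refine le_trans (le_of_eq ?_) (le_max_left _ _)
  rw [← ofReal_integral_norm_eq_lintegral_enorm (integrable_lpKernel P j),
    ← ofReal_integral_norm_eq_lintegral_enorm P.φ.integrable]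
  simp_rw [norm_lpKernel]
  rw [integral_const_mul, ← smul_eq_mul, integral_dilation j fun y => ‖P.φ y‖]

lemma enorm_lpKernel_le (j : ℤ) (y : Rd d) :
    ‖lpKernel P j y‖ₑ ≤ kernelBound P * 2 ^ ((d:ℝ) * j) := by
  rw [lpKernel, enorm_mul, enorm_two_zpow, mul_comm]
  gcongr
  exact (le_iSup (fun y => ‖P.φ y‖ₑ) _).trans (le_max_right _ _)

lemma eLpNorm_LP_le (j : ℤ) (hU : Continuous U) (hp : 1 ≤ p) (hpq : p ≤ q) :
    eLpNorm (LP P j U) q volume ≤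
      kernelBound P * 2 ^ (d * (p.toReal⁻¹ - q.toReal⁻¹) * j) * eLpNorm U p volume := by
  have pointwise (x : Rd d) :
      ‖LP P j U x‖ₑ ≤ ‖((‖lpKernel P j ·‖ₑ) ⋆ₗ[volume] (‖U ·‖ₑ)) x‖ₑ := by
    simp only [LP_eq, lconvolution_def, enorm_eq_self, neg_add_eq_sub, ← enorm_mul]
    exact enorm_integral_le_lintegral_enorm _
  calc eLpNorm (LP P j U) q volume
      ≤ eLpNorm ((‖lpKernel P j ·‖ₑ) ⋆ₗ[volume] (‖U ·‖ₑ)) q volume :=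
        eLpNorm_mono_enorm pointwise
    _ ≤ kernelBound P * ((2:ℝ≥0∞) ^ ((d:ℝ) * j)) ^ (p.toReal⁻¹ - q.toReal⁻¹) *
          eLpNorm (‖U ·‖ₑ) p volume :=
        eLpNorm_lconvolution_le_of_le (continuous_lpKernel P j).measurable.enorm
          hU.measurable.enorm hp hpq (lintegral_enorm_lpKernel_le P j) (enorm_lpKernel_le P j)
    _ = kernelBound P * 2 ^ (d * (p.toReal⁻¹ - q.toReal⁻¹) * j) * eLpNorm U p volume := by
        rw [← ENNReal.rpow_mul, eLpNorm_enorm]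
        ring_nf

variable [Nontrivial (Rd d)]

lemma eLpNorm_LP_le_sum (l : ℤ) (hv : IsWiener v) (hq : 1 ≤ q) :
    eLpNorm (LP P l v) q volume ≤
      ∑ i ∈ Finset.Icc (l - 2) (l + 2), eLpNorm (LP P i (LP P l v)) q volume := by
  have hlv := isWiener_LP P l hv
  have reproduce (x : Rd d) :
      LP P l v x = ∑ i ∈ Finset.Icc (l - 2) (l + 2), LP P i (LP P l v) x := by
    refine (hasSum_LP hlv x).unique (hasSum_sum_of_ne_finset_zero fun i hi => ?_)
    rw [LP_LP_eq_zero hv (by rw [Finset.mem_Icc] at hi; omega), Pi.zero_apply]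
  calc eLpNorm (LP P l v) q volume
      = eLpNorm (∑ i ∈ Finset.Icc (l - 2) (l + 2), LP P i (LP P l v)) q volume := by
        congr 1; ext x; rw [Finset.sum_apply, reproduce]
    _ ≤ _ := eLpNorm_sum_le
      (fun i _ => (isWiener_LP P i hlv).continuous.aestronglyMeasurable) hq

lemma eLpNorm_LP_le_eLpNorm_LP (l : ℤ) (hv : IsWiener v) (hp : 1 ≤ p) (hpq : p ≤ q) :
    eLpNorm (LP P l v) q volume ≤ 5 * 2 ^ (2 * d) * kernelBound P *
      2 ^ (d * (p.toReal⁻¹ - q.toReal⁻¹) * l) * eLpNorm (LP P l v) p volume := by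
  set α := p.toReal⁻¹ - q.toReal⁻¹
  have hα : 0 ≤ α := sub_nonneg.2 (inv_toReal_le_inv_toReal (zero_lt_one.trans_le hp).ne' hpq)
  have hα1 : α ≤ 1 := (sub_le_self _ (by positivity)).trans (inv_toReal_le_one hp)
  have weight {i : ℤ} (hi : i ∈ Finset.Icc (l - 2) (l + 2)) :
      (2:ℝ≥0∞) ^ (d * α * i) ≤ 2 ^ (2 * d) * 2 ^ (d * α * l) := by
    have hil : (i:ℝ) ≤ l + 2 := by exact_mod_cast (Finset.mem_Icc.1 hi).2
    have hdα : d * α ≤ d := mul_le_of_le_one_right (by positivity) hα1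
    rw [← ENNReal.rpow_natCast, ← two_rpow_add]
    refine ENNReal.rpow_le_rpow_of_exponent_le one_le_two ?_
    push_cast
    nlinarith [mul_le_mul_of_nonneg_left hil (by positivity : 0 ≤ d * α)]
  calc eLpNorm (LP P l v) q volume
      ≤ ∑ i ∈ Finset.Icc (l - 2) (l + 2), eLpNorm (LP P i (LP P l v)) q volume :=
        eLpNorm_LP_le_sum P l hv (hp.trans hpq)
    _ ≤ ∑ i ∈ Finset.Icc (l - 2) (l + 2),
          kernelBound P * (2 ^ (2 * d) * 2 ^ (d * α * l)) * eLpNorm (LP P l v) p volume := by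
        refine Finset.sum_le_sum fun i hi => ?_
        refine (eLpNorm_LP_le P i (isWiener_LP P l hv).continuous hp hpq).trans ?_
        gcongr
        exact weight hi
    _ = _ := by
        rw [Finset.sum_const, Int.card_Icc, show l + 2 + 1 - (l - 2) = 5 by ring]
        simp only [Int.reduceToNat, nsmul_eq_mul, Nat.cast_ofNat]
        ring

lemma eLpNorm_LP_mul_le {p' : ℝ≥0∞} [ENNReal.HolderTriple p p' m] (hm : 1 ≤ m) (hpp' : p ≤ p')
    (j k l : ℤ) (hu : IsWiener u) (hv : IsWiener v) :
    eLpNorm (LP P j (LP P k u * LP P l v)) p volume ≤ 5 * 2 ^ (2 * d) * kernelBound P ^ 2 *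
      2 ^ (d * p'.toReal⁻¹ * j + d * (p.toReal⁻¹ - p'.toReal⁻¹) * l) *
      (eLpNorm (LP P k u) p volume * eLpNorm (LP P l v) p volume) := by
  have hmp : m ≤ p := ENNReal.HolderTriple.le p p' m
  have hcu := (isWiener_LP P k hu).continuous
  have hcv := (isWiener_LP P l hv).continuous
  have holder : eLpNorm (LP P k u * LP P l v) m volume ≤
      eLpNorm (LP P k u) p volume * eLpNorm (LP P l v) p' volume := by
    simpa [← enorm_mul, Pi.mul_def] using eLpNorm_mul_le (p := p) (q := p') (r := m) (μ := volume)
      hcu.measurable.enorm.aemeasurable hcv.measurable.enorm.aemeasurable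
  have exponent : m.toReal⁻¹ - p.toReal⁻¹ = p'.toReal⁻¹ := by
    rw [← inv_toReal_add_inv_toReal (p := p) (q := p') (zero_lt_one.trans_le hm).ne',
      add_sub_cancel_left]
  calc eLpNorm (LP P j (LP P k u * LP P l v)) p volume
      ≤ kernelBound P * 2 ^ (d * p'.toReal⁻¹ * j) * eLpNorm (LP P k u * LP P l v) m volume := by
        rw [← exponent]
        exact eLpNorm_LP_le P j (hcu.mul hcv) hm hmp
    _ ≤ kernelBound P * 2 ^ (d * p'.toReal⁻¹ * j) * (eLpNorm (LP P k u) p volume *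
          (5 * 2 ^ (2 * d) * kernelBound P * 2 ^ (d * (p.toReal⁻¹ - p'.toReal⁻¹) * l) *
            eLpNorm (LP P l v) p volume)) := by
        gcongr
        exact holder.trans (by gcongr; exact eLpNorm_LP_le_eLpNorm_LP P l hv (hm.trans hmp) hpp')
    _ = _ := by rw [two_rpow_add]; ring

end Bernstein

section Paraproduct

lemma exists_holderTriple_conjugate {p : ℝ≥0∞} (hp : 1 ≤ p) :
    ∃ p' m : ℝ≥0∞, ENNReal.HolderTriple p p' m ∧ 1 ≤ m ∧ p ≤ p' ∧
      p'.toReal⁻¹ = min p.toReal⁻¹ (1 - p.toReal⁻¹) := by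
  have hp1 : p⁻¹ ≤ 1 := ENNReal.inv_le_one.2 hp
  have hpt : p⁻¹ ≠ ∞ := ne_top_of_le_ne_top ENNReal.one_ne_top hp1
  refine ⟨(min p⁻¹ (1 - p⁻¹))⁻¹, (p⁻¹ + min p⁻¹ (1 - p⁻¹))⁻¹, ⟨by simp only [inv_inv]⟩, ?_, ?_, ?_⟩
  · refine ENNReal.one_le_inv.2 ?_
    calc p⁻¹ + min p⁻¹ (1 - p⁻¹) ≤ p⁻¹ + (1 - p⁻¹) := by gcongr; exact min_le_right _ _
      _ = 1 := add_tsub_cancel_of_le hp1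
  · exact ENNReal.le_inv_iff_le_inv.2 (min_le_left _ _)
  · rw [ENNReal.toReal_inv, inv_inv, ENNReal.toReal_min hpt
      (ne_top_of_le_ne_top ENNReal.one_ne_top tsub_le_self), ENNReal.toReal_sub_of_le hp1
      ENNReal.one_ne_top, ENNReal.toReal_inv, ENNReal.toReal_one]

lemma exponent_le_of_near {σ c δ j k l : ℝ} (hδ : 0 ≤ δ) (hδc : δ ≤ c) (hlk : l ≤ k)
    (hjk : |j - k| ≤ 3) :
    σ * (j - k) + c * (l - k) ≤ 3 * |σ| + 6 * δ - δ * |j - k| - δ * |j - l| := by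
  have frequency : σ * (j - k) ≤ |σ| * 3 :=
    (le_abs_self _).trans ((abs_mul _ _).trans_le (by gcongr))
  have triangle : |j - l| ≤ |j - k| + (k - l) := by
    simpa [abs_of_nonneg (sub_nonneg.2 hlk)] using abs_sub_le j k l
  nlinarith [mul_le_mul_of_nonneg_left hjk hδ, mul_le_mul_of_nonneg_left triangle hδ,
    mul_le_mul_of_nonneg_right hδc (sub_nonneg.2 hlk)]

lemma exponent_le_of_far {σ c δ j k l : ℝ} (hδ : 0 ≤ δ) (hδσ : 2 * δ ≤ σ) (hjl : j ≤ l)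
    (hlk : l ≤ k) (hkl : k - l ≤ 3) :
    σ * (j - k) + c * (l - k) ≤ 3 * |c| - δ * |j - k| - δ * |j - l| := by
  have frequency : c * (l - k) ≤ |c| * 3 :=
    (le_abs_self _).trans ((abs_mul _ _).trans_le
      (by gcongr; rw [abs_sub_comm]; exact (abs_of_nonneg (sub_nonneg.2 hlk)).trans_le hkl))
  rw [abs_of_nonpos (by linarith : j - k ≤ 0), abs_of_nonpos (by linarith : j - l ≤ 0)]
  nlinarith [mul_le_mul_of_nonneg_right hδσ (by linarith : 0 ≤ k - j),
    mul_le_mul_of_nonneg_left hlk hδ]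

/-- The weight `2^{-δ|i|}` in which products of frequency blocks decay. -/
def dyadicDecay (δ : ℝ) (i : ℤ) : ℝ≥0∞ :=
  2 ^ (-(δ * |(i:ℝ)|))

lemma tsum_dyadicDecay_ne_top {δ : ℝ} (hδ : 0 < δ) : ∑' i, dyadicDecay δ i ≠ ∞ := by
  have ratio_lt_one : (2:ℝ≥0∞) ^ (-δ) < 1 :=
    ENNReal.rpow_lt_one_of_one_lt_of_neg ENNReal.one_lt_two (neg_lt_zero.2 hδ)
  have decay_natCast (n : ℕ) : dyadicDecay δ n = ((2:ℝ≥0∞) ^ (-δ)) ^ n := by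
    rw [dyadicDecay, ← ENNReal.rpow_natCast, ← ENNReal.rpow_mul, Int.cast_natCast, Nat.abs_cast,
      neg_mul]
  have decay_neg (i : ℤ) : dyadicDecay δ (-i) = dyadicDecay δ i := by
    simp only [dyadicDecay, Int.cast_neg, abs_neg]
  have geometric : ∑' n : ℕ, dyadicDecay δ n ≠ ∞ := by
    simp_rw [decay_natCast]
    rw [ENNReal.tsum_geometric]
    exact ENNReal.inv_ne_top.2 (tsub_pos_of_lt ratio_lt_one).ne'
  rw [tsum_of_nat_of_neg_add_one ENNReal.summable ENNReal.summable]
  refine ENNReal.add_ne_top.2 ⟨geometric, ne_top_of_le_ne_top geometric ?_⟩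
  simp_rw [decay_neg]
  exact_mod_cast ENNReal.tsum_comp_le_tsum_of_injective (add_left_injective 1)
    fun n : ℕ => dyadicDecay δ n

variable {d : ℕ} (P : LPData d) {u v : Rd d → ℂ} {p : ℝ≥0∞} {s s₁ s₂ δ : ℝ}

/-- The `j`-th term of the homogeneous Besov norm of regularity `s` over `L^p`. -/
def besovBlock (s : ℝ) (p : ℝ≥0∞) (j : ℤ) (u : Rd d → ℂ) : ℝ≥0∞ :=
  2 ^ (s * j) * eLpNorm (LP P j u) p volume

variable [Nontrivial (Rd d)]

lemma two_rpow_mul_eLpNorm_LP_mul_le {p' m : ℝ≥0∞} [ENNReal.HolderTriple p p' m] (hm : 1 ≤ m)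
    (hpp' : p ≤ p') {c : ℝ} {j k l : ℤ}
    (hc : (s + d * p'.toReal⁻¹) * (j - k) + (s₁ - s - d * p'.toReal⁻¹) * (l - k) ≤
      c - δ * |(j : ℝ) - k| - δ * |(j : ℝ) - l|)
    (hs : s = s₁ + s₂ - d * p.toReal⁻¹) (hu : IsWiener u) (hv : IsWiener v) :
    2 ^ (s * j) * eLpNorm (LP P j (LP P k u * LP P l v)) p volume ≤
      5 * 2 ^ (2 * d) * kernelBound P ^ 2 * 2 ^ c *
        (dyadicDecay δ (j - k) * besovBlock P s₁ p k u) *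
        (dyadicDecay δ (j - l) * besovBlock P s₂ p l v) := by
  have exponent : (2:ℝ≥0∞) ^ (s * j + (d * p'.toReal⁻¹ * j + d * (p.toReal⁻¹ - p'.toReal⁻¹) * l)) ≤
      2 ^ c * (dyadicDecay δ (j - k) * 2 ^ (s₁ * k)) *
        (dyadicDecay δ (j - l) * 2 ^ (s₂ * l)) := by
    simp only [dyadicDecay, ← two_rpow_add, Int.cast_sub]
    refine ENNReal.rpow_le_rpow_of_exponent_le one_le_two ?_
    subst hs
    linarith
  calc 2 ^ (s * j) * eLpNorm (LP P j (LP P k u * LP P l v)) p volume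
      ≤ 2 ^ (s * j) * (5 * 2 ^ (2 * d) * kernelBound P ^ 2 *
          2 ^ (d * p'.toReal⁻¹ * j + d * (p.toReal⁻¹ - p'.toReal⁻¹) * l) *
          (eLpNorm (LP P k u) p volume * eLpNorm (LP P l v) p volume)) := by
        gcongr
        exact eLpNorm_LP_mul_le P hm hpp' j k l hu hv
    _ = 5 * 2 ^ (2 * d) * kernelBound P ^ 2 *
          2 ^ (s * j + (d * p'.toReal⁻¹ * j + d * (p.toReal⁻¹ - p'.toReal⁻¹) * l)) *
          (eLpNorm (LP P k u) p volume * eLpNorm (LP P l v) p volume) := by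
        rw [two_rpow_add (s * j)]
        ring
    _ ≤ 5 * 2 ^ (2 * d) * kernelBound P ^ 2 *
          (2 ^ c * (dyadicDecay δ (j - k) * 2 ^ (s₁ * k)) *
            (dyadicDecay δ (j - l) * 2 ^ (s₂ * l))) *
          (eLpNorm (LP P k u) p volume * eLpNorm (LP P l v) p volume) := by gcongr
    _ = _ := by simp only [besovBlock]; ring

lemma exists_two_rpow_mul_eLpNorm_LP_mul_le_of_le (hp : 1 ≤ p)
    (hs : s = s₁ + s₂ - d * p.toReal⁻¹) (hδ : 0 ≤ δ) (hδ₁ : δ ≤ s₁ - s)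
    (hδs : 2 * δ ≤ s + d * min p.toReal⁻¹ (1 - p.toReal⁻¹)) :
    ∃ C ≠ ∞, ∀ u v, IsWiener u → IsWiener v → ∀ j k l : ℤ, l ≤ k →
      2 ^ (s * j) * eLpNorm (LP P j (LP P k u * LP P l v)) p volume ≤
        C * (dyadicDecay δ (j - k) * besovBlock P s₁ p k u) *
          (dyadicDecay δ (j - l) * besovBlock P s₂ p l v) := by
  obtain ⟨p', m, _, hm, hpp', hp'⟩ := exists_holderTriple_conjugate hp
  set c := 3 * |s| + 6 * δ + 3 * |s₁ - s - d * p'.toReal⁻¹|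
  refine ⟨5 * 2 ^ (2 * d) * kernelBound P ^ 2 * 2 ^ c, by finiteness [kernelBound_ne_top P],
    fun u v hu hv j k l hlk => ?_⟩
  have hlk' : (l:ℝ) ≤ k := by exact_mod_cast hlk
  by_cases near : |j - k| ≤ 3
  · -- Paraproduct: no integrability is lost in Hölder's inequality.
    refine two_rpow_mul_eLpNorm_LP_mul_le P (p' := ∞) (m := p) hp le_top ?_ hs hu hv
    have near_exponent := exponent_le_of_near (σ := s) (j := j) hδ hδ₁ hlk' (by exact_mod_cast near)
    simp only [ENNReal.toReal_top, inv_zero, mul_zero, add_zero, sub_zero]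
    linarith [abs_nonneg (s₁ - s - d * p'.toReal⁻¹)]
  by_cases far : k - l ≤ 3 ∧ j ≤ l
  · -- High-high interaction: Hölder's inequality into `L^m` trades integrability for decay.
    refine two_rpow_mul_eLpNorm_LP_mul_le P hm hpp' ?_ hs hu hv
    have far_exponent := exponent_le_of_far (j := j) (c := s₁ - s - d * p'.toReal⁻¹) hδ
      (hp' ▸ hδs) (by exact_mod_cast far.2) hlk' (by exact_mod_cast far.1)
    linarith [abs_nonneg s]
  · rw [LP_mul_LP_eq_zero hu hv (by rw [abs_le] at near; omega)]
    simp only [eLpNorm_zero, mul_zero, zero_le]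

lemma exists_two_rpow_mul_eLpNorm_LP_mul_le (hp : 1 ≤ p) (hs₁ : s₁ < d * p.toReal⁻¹)
    (hs₂ : s₂ < d * p.toReal⁻¹) (hs : 0 < s₁ + s₂)
    (hs' : d * (2 * p.toReal⁻¹ - 1) < s₁ + s₂) :
    ∃ δ > 0, ∃ C ≠ ∞, ∀ u v, IsWiener u → IsWiener v → ∀ j k l : ℤ,
      2 ^ ((s₁ + s₂ - d * p.toReal⁻¹) * j) *
          eLpNorm (LP P j (LP P k u * LP P l v)) p volume ≤
        C * (dyadicDecay δ (j - k) * besovBlock P s₁ p k u) *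
          (dyadicDecay δ (j - l) * besovBlock P s₂ p l v) := by
  set s := s₁ + s₂ - d * p.toReal⁻¹ with hsdef
  set rate := s + d * min p.toReal⁻¹ (1 - p.toReal⁻¹) with hrate
  have rate_pos : 0 < rate := by
    rcases min_choice p.toReal⁻¹ (1 - p.toReal⁻¹) with h | h <;> rw [hrate, h] <;> linarith
  set δ := min (min (s₁ - s) (s₂ - s)) (rate / 2)
  have hδ : 0 < δ := lt_min (lt_min (by linarith) (by linarith)) (by linarith)
  have hδ₁ : δ ≤ s₁ - s := (min_le_left _ _).trans (min_le_left _ _)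
  have hδ₂ : δ ≤ s₂ - s := (min_le_left _ _).trans (min_le_right _ _)
  have hδs : 2 * δ ≤ rate := by linarith [min_le_right (min (s₁ - s) (s₂ - s)) (rate / 2)]
  obtain ⟨C₁, hC₁, high_low⟩ :=
    exists_two_rpow_mul_eLpNorm_LP_mul_le_of_le P hp hsdef hδ.le hδ₁ hδs
  obtain ⟨C₂, hC₂, low_high⟩ := exists_two_rpow_mul_eLpNorm_LP_mul_le_of_le P (s₂ := s₁) hp
    (hsdef.trans (by ring)) hδ.le hδ₂ hδs
  refine ⟨δ, hδ, C₁ + C₂, by finiteness, fun u v hu hv j k l => ?_⟩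
  rcases le_total l k with hlk | hkl
  · refine (high_low u v hu hv j k l hlk).trans ?_
    gcongr
    exact le_self_add
  · rw [mul_comm (LP P k u), mul_right_comm]
    refine (low_high v u hv hu j l k hkl).trans ?_
    gcongr
    exact le_add_self

end Paraproduct

section CheminLerner

/-- Jointly measurable families of functions whose slices at almost every positive time are in the
Wiener algebra: the class on which the bilinear estimate is proved. -/
structure IsWienerFamily {d : ℕ} (f : ℝ → Rd d → ℂ) : Prop where
  aestronglyMeasurable : AEStronglyMeasurable (Function.uncurry f)
    ((volume.restrict (Set.Ioi 0)).prod volume)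
  isWiener : ∀ᵐ t ∂volume.restrict (Set.Ioi 0), IsWiener (f t)

lemma SliceSchwartz.isWienerFamily {d : ℕ} {f : ℝ → Rd d → ℂ} (hf : SliceSchwartz f) :
    IsWienerFamily f where
  aestronglyMeasurable := by
    have restricted := hf.1.aestronglyMeasurable (μ := volume.prod volume)
      (MeasurableSet.univ.prod measurableSet_Ioi)
    rw [← Measure.prod_restrict, Measure.restrict_univ] at restricted
    exact restricted.prod_swap
  isWiener := by
    filter_upwards [ae_restrict_mem measurableSet_Ioi] with t ht
    obtain ⟨u, hu⟩ := hf.2 t ht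
    exact hu ▸ isWiener_schwartzMap u

variable {d : ℕ} (P : LPData d) {f g : ℝ → Rd d → ℂ} {p q q₁ q₂ r r₁ r₂ : ℝ≥0∞} {s s₁ s₂ δ : ℝ}

lemma IsWienerFamily.mul (hf : IsWienerFamily f) (hg : IsWienerFamily g) :
    IsWienerFamily (f * g) where
  aestronglyMeasurable := hf.aestronglyMeasurable.mul hg.aestronglyMeasurable
  isWiener := by filter_upwards [hf.isWiener, hg.isWiener] with t hft hgt using hft.mul hgt

lemma IsWienerFamily.aestronglyMeasurable_LP (hf : IsWienerFamily f) (j : ℤ) :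
    AEStronglyMeasurable (Function.uncurry fun t => LP P j (f t))
      ((volume.restrict (Set.Ioi 0)).prod volume) := by
  have shift : Measure.QuasiMeasurePreserving (fun z : (ℝ × Rd d) × Rd d => (z.1.1, z.1.2 - z.2))
      (((volume.restrict (Set.Ioi 0)).prod volume).prod volume)
      ((volume.restrict (Set.Ioi 0)).prod volume) :=
    (QuasiMeasurePreserving.prodMap (.id _) (quasiMeasurePreserving_sub volume volume)).comp
      (measurePreserving_prodAssoc _ _ _).quasiMeasurePreserving
  have kernel : AEStronglyMeasurable (fun z : (ℝ × Rd d) × Rd d => lpKernel P j z.2)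
      (((volume.restrict (Set.Ioi 0)).prod volume).prod volume) :=
    ((continuous_lpKernel P j).comp continuous_snd).aestronglyMeasurable
  have translate := hf.aestronglyMeasurable.comp_quasiMeasurePreserving shift
  exact (kernel.mul translate).integral_prod_right'

lemma IsWienerFamily.aemeasurable_eLpNorm_LP (hf : IsWienerFamily f) (hp : p ≠ 0) (hp' : p ≠ ∞)
    (j : ℤ) :
    AEMeasurable (fun t => eLpNorm (LP P j (f t)) p volume) (volume.restrict (Set.Ioi 0)) := by
  simp_rw [eLpNorm_eq_lintegral_rpow_enorm_toReal hp hp']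
  exact ((hf.aestronglyMeasurable_LP P j).enorm.pow_const _).lintegral_prod_right'.pow_const _

lemma IsWienerFamily.aemeasurable_besovBlock (hf : IsWienerFamily f) (hp : p ≠ 0) (hp' : p ≠ ∞)
    (j : ℤ) :
    AEMeasurable (fun t => besovBlock P s p j (f t)) (volume.restrict (Set.Ioi 0)) :=
  (hf.aemeasurable_eLpNorm_LP P hp hp' j).const_mul _

lemma ellNorm_eq_eLpNorm (hr : r ≠ 0) (a : ℤ → ℝ≥0∞) :
    ellNorm r a = eLpNorm a r Measure.count := by
  rw [ellNorm]
  split_ifs with hr'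
  · simp [hr', eLpNormEssSup_eq_iSup]
  · simp only [eLpNorm_eq_lintegral_rpow_enorm_toReal hr hr', lintegral_count, enorm_eq_self]

lemma LqLp_eq_eLpNorm (hq : q ≠ 0) (F : ℝ → Rd d → ℂ) :
    LqLp q p F = eLpNorm (fun t => eLpNorm (F t) p volume) q (volume.restrict (Set.Ioi 0)) := by
  rw [LqLp]
  split_ifs with hq'
  · simp only [hq', eLpNorm_exponent_top, eLpNormEssSup, enorm_eq_self]
  · simp only [eLpNorm_eq_lintegral_rpow_enorm_toReal hq hq', enorm_eq_self]

/-- The `j`-th term of the Chemin–Lerner norm. -/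
def clBlock (s : ℝ) (q p : ℝ≥0∞) (j : ℤ) (f : ℝ → Rd d → ℂ) : ℝ≥0∞ :=
  eLpNorm (fun t => besovBlock P s p j (f t)) q (volume.restrict (Set.Ioi 0))

lemma IsWienerFamily.CL_eq (hf : IsWienerFamily f) (hp : p ≠ 0) (hp' : p ≠ ∞) (hq : q ≠ 0)
    (hr : r ≠ 0) :
    CL P s q p r f = eLpNorm (clBlock P s q p · f) r Measure.count := by
  simp_rw [CL, ellNorm_eq_eLpNorm hr, clBlock, besovBlock, ofReal_two_rpow, LqLp_eq_eLpNorm hq,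
    eLpNorm_const_mul _ hq (hf.aemeasurable_eLpNorm_LP P hp hp' _)]

lemma lconvolution_count (h a : ℤ → ℝ≥0∞) (j : ℤ) :
    (h ⋆ₗ[Measure.count] a) j = ∑' k, h (j - k) * a k := by
  rw [lconvolution_def, lintegral_count, ← (Equiv.subLeft j).tsum_eq]
  exact tsum_congr fun k => by rw [Equiv.subLeft_apply]; congr 2; abel

section Time

variable {α : Type*} [MeasurableSpace α] {μ : Measure α} {h : ℤ → ℝ≥0∞} {X Y : ℤ → α → ℝ≥0∞}

lemma aemeasurable_lconvolution_count (hX : ∀ k, AEMeasurable (X k) μ) (j : ℤ) :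
    AEMeasurable (fun t => (h ⋆ₗ[Measure.count] (X · t)) j) μ := by
  simp only [lconvolution_count]
  exact .tsum fun k => (hX k).const_mul _

lemma eLpNorm_lconvolution_count_le (hX : ∀ k, AEMeasurable (X k) μ) (hq : 1 ≤ q) (j : ℤ) :
    eLpNorm (fun t => (h ⋆ₗ[Measure.count] (X · t)) j) q μ ≤
      (h ⋆ₗ[Measure.count] fun k => eLpNorm (X k) q μ) j := by
  simp only [lconvolution_count]
  refine (eLpNorm_tsum_le (fun k => (hX k).const_mul _) hq).trans_eq (tsum_congr fun k => ?_)
  exact eLpNorm_const_mul _ (zero_lt_one.trans_le hq).ne' (hX k)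

lemma eLpNorm_lconvolution_count_mul_le [ENNReal.HolderTriple q₁ q₂ q] (hq₁ : 1 ≤ q₁)
    (hq₂ : 1 ≤ q₂) (hX : ∀ k, AEMeasurable (X k) μ) (hY : ∀ k, AEMeasurable (Y k) μ) (j : ℤ) :
    eLpNorm (fun t => (h ⋆ₗ[Measure.count] (X · t)) j * (h ⋆ₗ[Measure.count] (Y · t)) j) q μ ≤
      (h ⋆ₗ[Measure.count] fun k => eLpNorm (X k) q₁ μ) j *
        (h ⋆ₗ[Measure.count] fun k => eLpNorm (Y k) q₂ μ) j :=
  (eLpNorm_mul_le (aemeasurable_lconvolution_count hX j)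
    (aemeasurable_lconvolution_count hY j)).trans
      (mul_le_mul' (eLpNorm_lconvolution_count_le hX hq₁ j)
        (eLpNorm_lconvolution_count_le hY hq₂ j))

lemma eLpNorm_count_lconvolution_mul_le [ENNReal.HolderTriple r₁ r₂ r] (hr₁ : 1 ≤ r₁)
    (hr₂ : 1 ≤ r₂) (h A B : ℤ → ℝ≥0∞) :
    eLpNorm (fun j => (h ⋆ₗ[Measure.count] A) j * (h ⋆ₗ[Measure.count] B) j) r Measure.count ≤
      (∑' i, h i) ^ 2 * (eLpNorm A r₁ Measure.count * eLpNorm B r₂ Measure.count) := by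
  have young {s : ℝ≥0∞} (hs : 1 ≤ s) (D : ℤ → ℝ≥0∞) :
      eLpNorm (h ⋆ₗ[Measure.count] D) s Measure.count ≤
        (∑' i, h i) * eLpNorm D s Measure.count := by
    simpa only [lintegral_count] using
      eLpNorm_lconvolution_le (μ := Measure.count) (h := h) (a := D) .of_discrete .of_discrete hs
  calc eLpNorm (fun j => (h ⋆ₗ[Measure.count] A) j * (h ⋆ₗ[Measure.count] B) j) r Measure.count
      ≤ eLpNorm (h ⋆ₗ[Measure.count] A) r₁ Measure.count *
          eLpNorm (h ⋆ₗ[Measure.count] B) r₂ Measure.count :=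
        eLpNorm_mul_le Measurable.of_discrete.aemeasurable Measurable.of_discrete.aemeasurable
    _ ≤ (∑' i, h i) * eLpNorm A r₁ Measure.count * ((∑' i, h i) * eLpNorm B r₂ Measure.count) :=
        mul_le_mul' (young hr₁ A) (young hr₂ B)
    _ = _ := by ring

end Time

lemma besovBlock_mul_le [Nontrivial (Rd d)] {u v : Rd d → ℂ} {C : ℝ≥0∞} (hp : 1 ≤ p)
    (hu : IsWiener u) (hv : IsWiener v) (j : ℤ)
    (hC : ∀ k l : ℤ, 2 ^ (s * j) * eLpNorm (LP P j (LP P k u * LP P l v)) p volume ≤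
      C * (dyadicDecay δ (j - k) * besovBlock P s₁ p k u) *
        (dyadicDecay δ (j - l) * besovBlock P s₂ p l v)) :
    besovBlock P s p j (u * v) ≤
      C * (dyadicDecay δ ⋆ₗ[Measure.count] (besovBlock P s₁ p · u)) j *
        (dyadicDecay δ ⋆ₗ[Measure.count] (besovBlock P s₂ p · v)) j := by
  have wiener_term (n : ℤ × ℤ) : IsWiener (LP P j (LP P n.1 u * LP P n.2 v)) :=
    isWiener_LP P j ((isWiener_LP P n.1 hu).mul (isWiener_LP P n.2 hv))
  calc besovBlock P s p j (u * v)
      ≤ 2 ^ (s * j) * eLpNorm (fun x => ∑' n : ℤ × ℤ, ‖LP P j (LP P n.1 u * LP P n.2 v) x‖ₑ) p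
          volume := by
        rw [besovBlock]
        gcongr
        exact eLpNorm_mono_enorm fun x => by simpa using enorm_LP_mul_le hu hv j x
    _ ≤ 2 ^ (s * j) * ∑' n : ℤ × ℤ, eLpNorm (LP P j (LP P n.1 u * LP P n.2 v)) p volume := by
        gcongr
        simpa only [eLpNorm_enorm] using eLpNorm_tsum_le
          (fun n => (wiener_term n).continuous.measurable.enorm.aemeasurable) hp
    _ ≤ ∑' k, ∑' l, C * (dyadicDecay δ (j - k) * besovBlock P s₁ p k u) *
          (dyadicDecay δ (j - l) * besovBlock P s₂ p l v) := by
        rw [ENNReal.tsum_prod']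
        simp_rw [← ENNReal.tsum_mul_left]
        exact ENNReal.tsum_le_tsum fun k => ENNReal.tsum_le_tsum (hC k)
    _ = _ := by
        simp_rw [lconvolution_count, ENNReal.tsum_mul_left, ENNReal.tsum_mul_right]
        rw [ENNReal.tsum_mul_left]

lemma clBlock_mul_le [Nontrivial (Rd d)] [ENNReal.HolderTriple q₁ q₂ q] {C : ℝ≥0∞}
    (hp : 1 ≤ p) (hp' : p ≠ ∞) (hq₁ : 1 ≤ q₁) (hq₂ : 1 ≤ q₂) (hf : IsWienerFamily f)
    (hg : IsWienerFamily g) (j : ℤ)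
    (hC : ∀ u v, IsWiener u → IsWiener v → ∀ k l : ℤ,
      2 ^ (s * j) * eLpNorm (LP P j (LP P k u * LP P l v)) p volume ≤
        C * (dyadicDecay δ (j - k) * besovBlock P s₁ p k u) *
          (dyadicDecay δ (j - l) * besovBlock P s₂ p l v)) :
    clBlock P s q p j (f * g) ≤
      C * ((dyadicDecay δ ⋆ₗ[Measure.count] (clBlock P s₁ q₁ p · f)) j *
        (dyadicDecay δ ⋆ₗ[Measure.count] (clBlock P s₂ q₂ p · g)) j) := by
  have hp0 : p ≠ 0 := (zero_lt_one.trans_le hp).ne'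
  have hq : q ≠ 0 := ne_zero_of_holderTriple (p := q₁) (q := q₂)
    (zero_lt_one.trans_le hq₁).ne' (zero_lt_one.trans_le hq₂).ne'
  have hX (k : ℤ) := hf.aemeasurable_besovBlock P (s := s₁) hp0 hp' k
  have hY (k : ℤ) := hg.aemeasurable_besovBlock P (s := s₂) hp0 hp' k
  calc clBlock P s q p j (f * g)
      ≤ eLpNorm (fun t => C *
          ((dyadicDecay δ ⋆ₗ[Measure.count] (besovBlock P s₁ p · (f t))) j *
            (dyadicDecay δ ⋆ₗ[Measure.count] (besovBlock P s₂ p · (g t))) j)) q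
          (volume.restrict (Set.Ioi 0)) := by
        refine eLpNorm_mono_enorm_ae ?_
        filter_upwards [hf.isWiener, hg.isWiener] with t hft hgt
        simpa only [Pi.mul_apply f g, enorm_eq_self, mul_assoc] using
          besovBlock_mul_le P hp hft hgt j (hC _ _ hft hgt)
    _ ≤ _ := by
        refine (eLpNorm_const_mul C hq ((aemeasurable_lconvolution_count hX j).mul
          (aemeasurable_lconvolution_count hY j))).trans_le ?_
        gcongr
        exact eLpNorm_lconvolution_count_mul_le hq₁ hq₂ hX hY j

lemma CL_mul_le [Nontrivial (Rd d)] [ENNReal.HolderTriple q₁ q₂ q] [ENNReal.HolderTriple r₁ r₂ r]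
    {C : ℝ≥0∞} (hp : 1 ≤ p) (hp' : p ≠ ∞) (hq₁ : 1 ≤ q₁) (hq₂ : 1 ≤ q₂) (hr₁ : 1 ≤ r₁)
    (hr₂ : 1 ≤ r₂) (hf : IsWienerFamily f) (hg : IsWienerFamily g)
    (hC : ∀ u v, IsWiener u → IsWiener v → ∀ j k l : ℤ,
      2 ^ (s * j) * eLpNorm (LP P j (LP P k u * LP P l v)) p volume ≤
        C * (dyadicDecay δ (j - k) * besovBlock P s₁ p k u) *
          (dyadicDecay δ (j - l) * besovBlock P s₂ p l v)) :
    CL P s q p r (f * g) ≤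
      C * (∑' i, dyadicDecay δ i) ^ 2 * (CL P s₁ q₁ p r₁ f * CL P s₂ q₂ p r₂ g) := by
  have ne_zero {x : ℝ≥0∞} (hx : 1 ≤ x) : x ≠ 0 := (zero_lt_one.trans_le hx).ne'
  have hq : q ≠ 0 := ne_zero_of_holderTriple (ne_zero hq₁) (ne_zero hq₂)
  have hr : r ≠ 0 := ne_zero_of_holderTriple (ne_zero hr₁) (ne_zero hr₂)
  rw [hf.CL_eq P (ne_zero hp) hp' (ne_zero hq₁) (ne_zero hr₁),
    hg.CL_eq P (ne_zero hp) hp' (ne_zero hq₂) (ne_zero hr₂)]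
  calc CL P s q p r (f * g)
      = eLpNorm (clBlock P s q p · (f * g)) r Measure.count :=
        (hf.mul hg).CL_eq P (ne_zero hp) hp' hq hr
    _ ≤ eLpNorm (fun j => C * ((dyadicDecay δ ⋆ₗ[Measure.count] (clBlock P s₁ q₁ p · f)) j *
          (dyadicDecay δ ⋆ₗ[Measure.count] (clBlock P s₂ q₂ p · g)) j)) r Measure.count :=
        eLpNorm_mono_enorm fun j => by
          simpa only [enorm_eq_self] using clBlock_mul_le P hp hp' hq₁ hq₂ hf hg j
            fun u v hu hv => hC u v hu hv j
    _ ≤ C * (∑' i, dyadicDecay δ i) ^ 2 * (eLpNorm (clBlock P s₁ q₁ p · f) r₁ Measure.count *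
          eLpNorm (clBlock P s₂ q₂ p · g) r₂ Measure.count) := by
        rw [eLpNorm_const_mul C hr Measurable.of_discrete.aemeasurable, mul_assoc]
        gcongr
        exact eLpNorm_count_lconvolution_mul_le hr₁ hr₂ _ _ _

theorem exists_CL_mul_le [ENNReal.HolderTriple q₁ q₂ q] [ENNReal.HolderTriple r₁ r₂ r]
    (hp : 1 ≤ p) (hq₁ : 1 ≤ q₁) (hq₂ : 1 ≤ q₂) (hr₁ : 1 ≤ r₁) (hr₂ : 1 ≤ r₂)
    (hs₁ : s₁ < d * p.toReal⁻¹) (hs₂ : s₂ < d * p.toReal⁻¹) (hs : 0 < s₁ + s₂)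
    (hs' : d * (2 * p.toReal⁻¹ - 1) < s₁ + s₂) :
    ∃ C > (0:ℝ), ∀ f g : ℝ → Rd d → ℂ, IsWienerFamily f → IsWienerFamily g →
      CL P (s₁ + s₂ - d * p.toReal⁻¹) q p r (fun t x => f t x * g t x) ≤
        ENNReal.ofReal C * CL P s₁ q₁ p r₁ f * CL P s₂ q₂ p r₂ g := by
  have critical_pos : 0 < d * p.toReal⁻¹ := by linarith
  have hp' : p ≠ ∞ := by rintro rfl; simp at critical_pos
  have hd : NeZero d := ⟨by rintro rfl; simp at critical_pos⟩
  obtain ⟨δ, hδ, C, hC, block⟩ := exists_two_rpow_mul_eLpNorm_LP_mul_le P hp hs₁ hs₂ hs hs'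
  set K := C * (∑' i, dyadicDecay δ i) ^ 2
  have hK : K ≠ ∞ := by finiteness [tsum_dyadicDecay_ne_top hδ]
  refine ⟨K.toReal + 1, by positivity, fun f g hf hg => ?_⟩
  have K_le : K ≤ ENNReal.ofReal (K.toReal + 1) :=
    ENNReal.le_ofReal_iff_toReal_le hK (by positivity) |>.2 (by linarith)
  rw [mul_assoc]
  exact (CL_mul_le P hp hp' hq₁ hq₂ hr₁ hr₂ hf hg block).trans (by gcongr)

lemma CL_top_le (hr : r ≠ 0) (f : ℝ → Rd d → ℂ) : CL P s q p ∞ f ≤ CL P s q p r f := by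
  simp_rw [CL, ellNorm_eq_eLpNorm hr]
  rw [ellNorm, if_pos rfl]
  exact iSup_le fun j => enorm_le_eLpNorm_count _ j hr

end CheminLerner

section CriticalExponents

variable {d : ℕ} {p ρ ρ' : ℝ≥0∞}

instance holderTriple_self_div_two : ENNReal.HolderTriple ρ ρ (ρ / 2) where
  inv_add_inv_eq_inv := by
    rw [ENNReal.inv_div (.inl ENNReal.ofNat_ne_top) (.inl two_ne_zero), ← two_mul, div_eq_mul_inv]

lemma one_lt_mul_toReal_inv_add [conj : ENNReal.HolderConjugate ρ ρ'] (hp : p ≠ 0)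
    (h : p < ρ' * d) : 1 < d * p.toReal⁻¹ + ρ.toReal⁻¹ := by
  have hd : (d : ℝ≥0∞) ≠ 0 := by rintro hd; simp [hd] at h
  have inv_add_inv : ρ⁻¹ + ρ'⁻¹ = 1 := conj.inv_add_inv_eq_one
  have hρ : ρ⁻¹ ≠ ∞ := ne_top_of_le_ne_top ENNReal.one_ne_top (inv_add_inv ▸ le_self_add)
  have inv_lt : ρ'⁻¹ < d * p⁻¹ := by
    rw [← div_eq_mul_inv, ← ENNReal.inv_div (.inl (ENNReal.natCast_ne_top d)) (.inl hd),
      ENNReal.inv_lt_inv]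
    exact ENNReal.div_lt_of_lt_mul h
  have one_lt : 1 < d * p⁻¹ + ρ⁻¹ := by
    rw [← inv_add_inv, add_comm]
    exact ENNReal.add_lt_add_right hρ inv_lt
  have := (ENNReal.toReal_lt_toReal ENNReal.one_ne_top (by finiteness)).2 one_lt
  rwa [ENNReal.toReal_add (by finiteness) hρ, ENNReal.toReal_mul, ENNReal.toReal_natCast,
    ENNReal.toReal_inv, ENNReal.toReal_inv, ENNReal.toReal_one] at this

lemma two_lt_natCast_add_two_mul_toReal_inv (hd : 2 ≤ d) (hρ : ρ ≠ 0) (h : d = 2 → ρ ≠ ∞) :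
    2 < d + 2 * ρ.toReal⁻¹ := by
  rcases hd.eq_or_lt with rfl | hd
  · have : 0 < ρ.toReal := ENNReal.toReal_pos hρ (h rfl)
    rw [Nat.cast_ofNat, lt_add_iff_pos_right]
    positivity
  · have : (2 : ℝ) < d := by exact_mod_cast hd
    exact lt_add_of_lt_of_nonneg this (by positivity)

end CriticalExponents

theorem bilinear_estimate_chemin_lerner_general {d : ℕ} (P : LPData d) {p ρ ρ' r : ℝ≥0∞}
    [ENNReal.HolderConjugate ρ ρ'] (hp : 1 ≤ p) (hr : 1 ≤ r) (hρ : 1 < ρ) (hpd : p < ρ' * d)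
    (hdρ : 2 < d + 2 * ρ.toReal⁻¹) :
    ∃ C > (0:ℝ), ∀ f g : ℝ → Rd d → ℂ, IsWienerFamily f → IsWienerFamily g →
      CL P (d * (1 / p).toReal + 2 * (1 / ρ).toReal - 2) (ρ / 2) p r (fun t x => f t x * g t x) ≤
        ENNReal.ofReal C * CL P (d * (1 / p).toReal + (1 / ρ).toReal - 1) ρ p r f *
          CL P (d * (1 / p).toReal + (1 / ρ).toReal - 1) ρ p r g := by
  have pos : 1 < d * p.toReal⁻¹ + ρ.toReal⁻¹ :=
    one_lt_mul_toReal_inv_add (zero_lt_one.trans_le hp).ne' hpd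
  have inv_lt_one : ρ.toReal⁻¹ < 1 := by
    rw [← ENNReal.toReal_inv, ← ENNReal.toReal_one]
    exact ENNReal.toReal_strict_mono ENNReal.one_ne_top (ENNReal.inv_lt_one.2 hρ)
  simp only [one_div, ENNReal.toReal_inv]
  set s := d * p.toReal⁻¹ + ρ.toReal⁻¹ - 1
  obtain ⟨C, hC, bound⟩ := exists_CL_mul_le P (q := ρ / 2) (r := r) (r₁ := r) (s₁ := s) (s₂ := s)
    hp hρ.le hρ.le hr le_top (by linarith) (by linarith) (by linarith) (by linarith)
  refine ⟨C, hC, fun f g hf hg => ?_⟩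
  rw [show d * p.toReal⁻¹ + 2 * ρ.toReal⁻¹ - 2 = s + s - d * p.toReal⁻¹ by ring]
  refine (bound f g hf hg).trans ?_
  gcongr
  exact CL_top_le P (zero_lt_one.trans_le hr).ne' g

/-- Bilinear estimate in scaling critical Chemin–Lerner spaces:
with `q* = max{2,q}` and `q*'` its Hölder conjugate, `1 ≤ p < q*'(n-1)`
(and `q < ∞` if `n = 3`),
`‖fg‖_{L̃^{q*/2}(Ḃ^{(n-1)/p+2/q*-2}_{p,r})}
  ≤ C ‖f‖_{L̃^{q*}(Ḃ^{(n-1)/p+1/q*-1}_{p,r})} ‖g‖_{L̃^{q*}(Ḃ^{(n-1)/p+1/q*-1}_{p,r})}`. -/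
theorem bilinear_estimate_chemin_lerner (n : ℕ) (hn : 3 ≤ n) (P : LPData (n-1))
    (p q r qs' : ℝ≥0∞) (hp : 1 ≤ p) (hq : 1 ≤ q) (hr : 1 ≤ r)
    (hconj : 1 / max 2 q + 1 / qs' = 1)
    (hp2 : p < qs' * ((n - 1 : ℕ) : ℝ≥0∞))
    (h3 : n = 3 → q ≠ ∞) :
    ∃ C > (0:ℝ), ∀ f g : ℝ → Rd (n-1) → ℂ, SliceSchwartz f → SliceSchwartz g →
      CL P (((n:ℝ) - 1) * (1/p).toReal + 2 * (1/(max 2 q)).toReal - 2) (max 2 q / 2) p r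
          (fun t x => f t x * g t x)
        ≤ ENNReal.ofReal C *
            CL P (((n:ℝ) - 1) * (1/p).toReal + (1/(max 2 q)).toReal - 1) (max 2 q) p r f *
            CL P (((n:ℝ) - 1) * (1/p).toReal + (1/(max 2 q)).toReal - 1) (max 2 q) p r g := by
  have conj : ENNReal.HolderConjugate (max 2 q) qs' := ⟨by simpa using hconj⟩
  have hρ : 1 < max 2 q := ENNReal.one_lt_two.trans_le (le_max_left 2 q)
  have hdρ : 2 < ((n - 1 : ℕ) : ℝ) + 2 * (max 2 q).toReal⁻¹ :=
    two_lt_natCast_add_two_mul_toReal_inv (by omega) (zero_lt_one.trans hρ).ne'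
      fun hn2 => (max_lt ENNReal.ofNat_lt_top (h3 (by omega)).lt_top).ne
  obtain ⟨C, hC, bound⟩ := bilinear_estimate_chemin_lerner_general P hp hr hρ hp2 hdρ
  rw [Nat.cast_pred (by omega)] at bound
  exact ⟨C, hC, fun f g hf hg => bound f g hf.isWienerFamily hg.isWienerFamily⟩
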